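/- Let K ≥ 1, let i_1, …, i_K be integers with i_k ≥ 1 for all k, let p ∈ {0,1}, and set h = Π_{k=1}^{K} P_{2·i_k} + (−1)^p. Then every complex root of h is real if and only if one of the following holds: (a) K = 1; (b) K = 2, i_1 = i_2, and p = 1; (c) K = 2, |i_1 − i_2| = 1, and p = 0. -/

import Mathlib

open Polynomial Real

/-- The Chebyshev polynomial of the second kind rescaled to `(-2, 2)`:
`P n (x) = U n (x / 2)`. -/
noncomputable def P (n : ℕ) : Polynomial ℝ :=
  (Polynomial.Chebyshev.U ℝ n).comp (Polynomial.C 2⁻¹ * X)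

/-! Let `q = ∏ P_{2 i_k}` and suppose that `h = q + e`, `e = ±1`, has only real zeros. Where `h`
does not vanish, `log |h|` is then strictly concave, so on an interval free of zeros of `h` the
derivative `h' = q'` has at most one zero, and by Rolle `q` has at most two, counted with
multiplicity.

Substituting `x = 2 sin θ` gives `P_{2i}(x) cos θ = (-1)^i cos ((2i+1) θ)`, so the zeros of `P_{2i}`
nearest to `0` are at `θ = ±π / (2 (2i+1))`, and `|q| < 1` between `θ = 0` and the third of the
least positive zeros of the factors. For `K ≥ 3` this interval contains three zeros of `q`. For
`K = 2`, with indices `u ≥ v`, it extends through `θ = 0`, again with three zeros, unless `e` has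
the sign that makes `0` a zero of `h`; and when `u ≥ v + 2` it extends to the second positive zero
of `P_{2u}`, which makes three zeros on the positive side.

In the remaining cases sum-to-product formulas factor `P_{2n} ± 1`, and
`P_{2n+2} P_{2n} + 1 = P_{2n+1}²`.
-/

open scoped Finset

section RealRooted

/-- All complex zeros of the real polynomial `p` are real; the zero polynomial does not qualify. -/
def RealRooted (p : ℝ[X]) : Prop :=
  ∀ z : ℂ, aeval z p = 0 → z.im = 0

theorem RealRooted.splits {p : ℝ[X]} (hp : RealRooted p) : p.Splits := by
  refine Splits.of_splits_map (algebraMap ℝ ℂ) (IsAlgClosed.splits _) fun z hz ↦ ?_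
  have hz0 : aeval z p = 0 := by simpa [aeval_def, eval_map] using isRoot_of_mem_roots hz
  exact ⟨z.re, Complex.ext rfl (hp z hz0).symm⟩

theorem RealRooted.mul {p q : ℝ[X]} (hp : RealRooted p) (hq : RealRooted q) :
    RealRooted (p * q) := fun z hz ↦
  (mul_eq_zero.1 ((map_mul (aeval z) p q).symm.trans hz)).elim (hp z) (hq z)

/-- The Laguerre expression `p' ^ 2 - p * p''` of `p`, which is `-p ^ 2` times the second derivative
of `log |p|`; it is used to show that `log |p|` is strictly concave away from the zeros of `p` when
all zeros of `p` are real. -/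
noncomputable def laguerre {R : Type*} [CommRing R] (p : R[X]) : R[X] :=
  derivative p ^ 2 - p * derivative (derivative p)

theorem laguerre_mul {R : Type*} [CommRing R] (p q : R[X]) :
    laguerre (p * q) = laguerre p * q ^ 2 + p ^ 2 * laguerre q := by
  simp only [laguerre, derivative_mul, derivative_add]
  ring

theorem eval_laguerre_nonneg {p : ℝ[X]} (hp : p.Splits) (x : ℝ) : 0 ≤ (laguerre p).eval x := by
  induction hp using Submonoid.closure_induction with
  | mem p hp => rcases hp with ⟨a, rfl⟩ | ⟨a, rfl⟩ <;> simp [laguerre]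
  | one => simp [laguerre]
  | mul p q _ _ ihp ihq =>
    simp only [laguerre_mul, eval_add, eval_mul, eval_pow]
    positivity

theorem eval_laguerre_pos {p : ℝ[X]} (hp : p.Splits) (hdeg : p.natDegree ≠ 0) {x : ℝ}
    (hx : p.eval x ≠ 0) : 0 < (laguerre p).eval x := by
  have hp0 : p ≠ 0 := by rintro rfl; simp at hdeg
  obtain ⟨r, hr⟩ :=
    hp.exists_eval_eq_zero fun h ↦ hdeg (natDegree_eq_zero_iff_degree_le_zero.2 h.le)
  obtain ⟨q, rfl⟩ := dvd_iff_isRoot.2 hr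
  have hq : q.Splits := hp.of_dvd hp0 (dvd_mul_left q _)
  have hqx : q.eval x ≠ 0 := right_ne_zero_of_mul (by simpa using hx)
  have hlinear : (laguerre (X - C r)).eval x = 1 := by simp [laguerre]
  have := eval_laguerre_nonneg hq x
  simp only [laguerre_mul, eval_add, eval_mul, eval_pow, hlinear]
  positivity

variable {I : Set ℝ}

theorem strictAntiOn_eval_derivative_div_eval {p : ℝ[X]} (hp : p.Splits) (hdeg : p.natDegree ≠ 0)
    (hI : I.OrdConnected) (hpI : ∀ x ∈ I, p.eval x ≠ 0) :
    StrictAntiOn (fun x ↦ (derivative p).eval x / p.eval x) I := by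
  refine strictAntiOn_of_deriv_neg hI.convex
    ((derivative p).continuousOn.div p.continuousOn hpI) fun x hx ↦ ?_
  have hx0 := hpI x (interior_subset hx)
  have hL := eval_laguerre_pos hp hdeg hx0
  simp only [laguerre, eval_sub, eval_pow, eval_mul] at hL
  rw [(((derivative p).hasDerivAt x).fun_div (p.hasDerivAt x) hx0).deriv]
  exact div_neg_of_neg_of_pos (by linarith) (by positivity)

theorem card_filter_roots_derivative_le_one [DecidablePred (· ∈ I)] {p : ℝ[X]} (hp : p.Splits)
    (hI : I.OrdConnected) (hpI : ∀ x ∈ I, p.eval x ≠ 0) :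
    ((derivative p).roots.filter (· ∈ I)).card ≤ 1 := by
  by_cases hdeg : p.natDegree = 0
  · simp [derivative_of_natDegree_zero hdeg]
  have hsimple : ((derivative p).roots.filter (· ∈ I)).Nodup := by
    refine Multiset.nodup_iff_count_le_one.2 fun x ↦ ?_
    by_contra! hx
    obtain ⟨hxroot, hxI⟩ :=
      Multiset.mem_filter.1 (Multiset.count_pos.1 (zero_lt_one.trans hx))
    rw [Multiset.count_filter_of_pos hxI, count_roots,
      one_lt_rootMultiplicity_iff_isRoot (mem_roots'.1 hxroot).1] at hx
    have hL := eval_laguerre_pos hp hdeg (hpI x hxI)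
    simp [laguerre, hx.1.eq_zero, hx.2.eq_zero] at hL
  rw [← Multiset.toFinset_card_of_nodup hsimple, Finset.card_le_one]
  intro x hx y hy
  simp only [Multiset.mem_toFinset, Multiset.mem_filter] at hx hy
  apply (strictAntiOn_eval_derivative_div_eval hp hdeg hI hpI).injOn hx.2 hy.2
  simp [isRoot_of_mem_roots hx.1 |>.eq_zero, isRoot_of_mem_roots hy.1 |>.eq_zero]

theorem card_filter_toFinset_roots_le_card_derivative_sdiff_succ [DecidablePred (· ∈ I)] (p : ℝ[X])
    (hI : I.OrdConnected) :
    #{x ∈ p.roots.toFinset | x ∈ I} ≤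
      #({x ∈ (derivative p).roots.toFinset | x ∈ I} \ {x ∈ p.roots.toFinset | x ∈ I}) + 1 := by
  by_cases hp' : derivative p = 0
  · rw [eq_C_of_derivative_eq_zero hp']
    simp
  refine Finset.card_le_sdiff_of_interleaved fun x hx y hy hxy _ ↦ ?_
  simp only [Finset.mem_filter, Multiset.mem_toFinset] at hx hy
  obtain ⟨z, hz, hz'⟩ := exists_deriv_eq_zero hxy p.continuousOn
    ((isRoot_of_mem_roots hx.1).trans (isRoot_of_mem_roots hy.1).symm)
  refine ⟨z, ?_, hz⟩
  simpa [hp', ← p.deriv, hz'] using hI.out hx.2 hy.2 (Set.Ioo_subset_Icc_self hz)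

theorem card_filter_roots_le_derivative [DecidablePred (· ∈ I)] (p : ℝ[X]) (hI : I.OrdConnected) :
    (p.roots.filter (· ∈ I)).card ≤ ((derivative p).roots.filter (· ∈ I)).card + 1 := by
  set M := p.roots.filter (· ∈ I) with hM
  set M' := (derivative p).roots.filter (· ∈ I) with hM'
  have hcount (x : ℝ) (hx : x ∈ M) : M.count x ≤ M'.count x + 1 := by
    have hxI := (Multiset.mem_filter.1 hx).2
    have := rootMultiplicity_sub_one_le_derivative_rootMultiplicity p x
    rw [hM, hM', Multiset.count_filter_of_pos hxI, Multiset.count_filter_of_pos hxI, count_roots,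
      count_roots]
    omega
  have hinterlace : M.toFinset.card ≤ (M'.toFinset \ M.toFinset).card + 1 := by
    simpa only [hM, hM', Multiset.toFinset_filter] using
      card_filter_toFinset_roots_le_card_derivative_sdiff_succ p hI
  calc
    M.card = ∑ x ∈ M.toFinset, M.count x := (Multiset.toFinset_sum_count_eq M).symm
    _ ≤ ∑ x ∈ M.toFinset, (M'.count x + 1) :=
      Finset.sum_le_sum fun x hx ↦ hcount x (Multiset.mem_toFinset.1 hx)
    _ = ∑ x ∈ M.toFinset, M'.count x + M.toFinset.card := by
      rw [Finset.sum_add_distrib, Finset.card_eq_sum_ones]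
    _ ≤ ∑ x ∈ M.toFinset, M'.count x + (∑ x ∈ M'.toFinset \ M.toFinset, M'.count x + 1) := by
      grw [hinterlace, Finset.card_eq_sum_ones]
      gcongr with x hx
      exact Multiset.one_le_count_iff_mem.2 (Multiset.mem_toFinset.1 (Finset.mem_sdiff.1 hx).1)
    _ = M'.card + 1 := by
      rw [← add_assoc, ← Finset.sum_union Finset.disjoint_sdiff, Multiset.sum_count_eq_card]
      simp +contextual

theorem card_filter_roots_le_two_of_derivative_eq [DecidablePred (· ∈ I)] {p q : ℝ[X]}
    (hp : p.Splits) (hI : I.OrdConnected) (hpI : ∀ x ∈ I, p.eval x ≠ 0)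
    (hqp : derivative q = derivative p) : (q.roots.filter (· ∈ I)).card ≤ 2 := by
  have := card_filter_roots_le_derivative q hI
  rw [hqp] at this
  exact this.trans (Nat.succ_le_succ (card_filter_roots_derivative_le_one hp hI hpI))

end RealRooted

theorem exists_card_lt_and_le_card {ι α : Type*} [Fintype ι] [LinearOrder α] (f : ι → α) {n : ℕ}
    (hn : n ≠ 0) (hcard : n ≤ Fintype.card ι) :
    ∃ d, #{k | f d < f k} < n ∧ n ≤ #{k | f d ≤ f k} := by
  have hexists {s : Finset ι} (hs : s.Nonempty) (hsf : ∀ k ∈ s, ∀ l, f k ≤ f l → l ∈ s) :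
      ∃ d ∈ s, s = ({k | f d ≤ f k} : Finset ι) := by
    obtain ⟨d, hd, hmin⟩ := s.exists_min_image f hs
    exact ⟨d, hd, by ext k; simpa using ⟨hmin k, hsf d hd k⟩⟩
  have hne : ({d | n ≤ #{k | f d ≤ f k}} : Finset ι).Nonempty := by
    obtain ⟨d, -, hd⟩ := hexists (s := .univ) (Finset.card_pos.1 (by rw [Finset.card_univ]; omega))
      (by simp)
    exact ⟨d, by simpa [← hd] using hcard⟩
  obtain ⟨d, hd, hmax⟩ := Finset.exists_max_image _ f hne
  simp only [Finset.mem_filter, Finset.mem_univ, true_and] at hd hmax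
  refine ⟨d, ?_, hd⟩
  by_contra! hcon
  obtain ⟨m, hm, hmeq⟩ := hexists (s := {k | f d < f k}) (Finset.card_pos.1 (by omega))
    fun k hk l hkl ↦ by simpa using (by simpa using hk : f d < f k).trans_le hkl
  exact (hmax m (hmeq ▸ hcon)).not_gt (by simpa using hm)

section Chebyshev

theorem P_eq_S (n : ℕ) : P n = Chebyshev.S ℝ n := by
  rw [P, ← invOf_eq_inv, Chebyshev.S_eq_U_comp_half_mul_X]

theorem aeval_P_two_mul_cos_mul_sin (n : ℕ) (φ : ℂ) :
    aeval (2 * Complex.cos φ) (P n) * Complex.sin φ = Complex.sin ((n + 1) * φ) := by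
  simp [P_eq_S]

theorem eval_P_two_mul_sin_mul_cos (i : ℕ) (θ : ℝ) :
    (P (2 * i)).eval (2 * sin θ) * cos θ = (-1) ^ i * cos ((2 * i + 1) * θ) := by
  have hshift : ((2 * i : ℕ) + 1 : ℝ) * (π / 2 - θ) = π / 2 - (2 * i + 1) * θ + i * π := by
    push_cast; ring
  have h := Chebyshev.S_two_mul_real_cos (π / 2 - θ) (2 * i : ℕ)
  rwa [cos_pi_div_two_sub, sin_pi_div_two_sub, Int.cast_natCast, hshift, sin_add_nat_mul_pi,
    sin_pi_div_two_sub, ← P_eq_S] at h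

theorem eval_zero_P_two_mul (i : ℕ) : (P (2 * i)).eval 0 = (-1) ^ i := by
  simpa using eval_P_two_mul_sin_mul_cos i 0

theorem P_two_mul_ne_zero (i : ℕ) : P (2 * i) ≠ 0 := by
  refine ne_of_apply_ne (eval 0) ?_
  rw [eval_zero_P_two_mul, eval_zero]
  exact pow_ne_zero i (by norm_num)

theorem two_mul_sin_mem_roots_P {i : ℕ} {θ : ℝ} (hθ : cos θ ≠ 0)
    (hiθ : cos ((2 * i + 1) * θ) = 0) : 2 * sin θ ∈ (P (2 * i)).roots := by
  have h := eval_P_two_mul_sin_mul_cos i θ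
  rw [hiθ, mul_zero] at h
  exact (mem_roots (P_two_mul_ne_zero i)).2 ((mul_eq_zero.1 h).resolve_right hθ)

theorem abs_eval_P_two_mul_sin_mul_abs_cos (i : ℕ) (θ : ℝ) :
    |(P (2 * i)).eval (2 * sin θ)| * |cos θ| = |cos ((2 * i + 1) * θ)| := by
  rw [← abs_mul, eval_P_two_mul_sin_mul_cos, abs_mul, abs_neg_one_pow, one_mul]

/-- The least positive zero of `θ ↦ P (2 * i) (2 * sin θ)` when `1 ≤ i`. -/
noncomputable def firstZeroAngle (i : ℕ) : ℝ :=
  π / (2 * (2 * i + 1))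

theorem two_mul_add_one_mul_firstZeroAngle (i : ℕ) :
    (2 * i + 1) * firstZeroAngle i = π / 2 := by
  unfold firstZeroAngle
  field_simp

theorem firstZeroAngle_pos (i : ℕ) : 0 < firstZeroAngle i := by
  unfold firstZeroAngle
  positivity

theorem firstZeroAngle_antitone : Antitone firstZeroAngle := by
  intro i j hij
  unfold firstZeroAngle
  gcongr

theorem firstZeroAngle_le_pi_div_six {i : ℕ} (hi : 1 ≤ i) : firstZeroAngle i ≤ π / 6 := by
  refine (firstZeroAngle_antitone hi).trans_eq ?_
  norm_num [firstZeroAngle]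

theorem cos_pos_of_abs_le_firstZeroAngle {i : ℕ} (hi : 1 ≤ i) {θ : ℝ}
    (hθ : |θ| ≤ firstZeroAngle i) : 0 < cos θ :=
  cos_pos_of_mem_Ioo <| abs_lt.1 <| by linarith [firstZeroAngle_le_pi_div_six hi, pi_pos]

theorem two_mul_sin_firstZeroAngle_mem_roots {i : ℕ} (hi : 1 ≤ i) :
    2 * sin (firstZeroAngle i) ∈ (P (2 * i)).roots := by
  refine two_mul_sin_mem_roots_P
    (cos_pos_of_abs_le_firstZeroAngle hi (abs_of_pos (firstZeroAngle_pos i)).le).ne' ?_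
  rw [two_mul_add_one_mul_firstZeroAngle, cos_pi_div_two]

theorem two_mul_sin_neg_firstZeroAngle_mem_roots {i : ℕ} (hi : 1 ≤ i) :
    2 * sin (-firstZeroAngle i) ∈ (P (2 * i)).roots := by
  refine two_mul_sin_mem_roots_P (cos_pos_of_abs_le_firstZeroAngle hi
    (by rw [abs_neg, abs_of_pos (firstZeroAngle_pos i)])).ne' ?_
  rw [mul_neg, two_mul_add_one_mul_firstZeroAngle, cos_neg, cos_pi_div_two]

theorem three_mul_firstZeroAngle_lt_pi_div_two {i : ℕ} (hi : 2 ≤ i) :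
    3 * firstZeroAngle i < π / 2 := by
  have hi2 : firstZeroAngle i ≤ π / 10 :=
    (firstZeroAngle_antitone hi).trans_eq (by norm_num [firstZeroAngle])
  linarith [pi_pos]

theorem two_mul_sin_three_mul_firstZeroAngle_mem_roots {i : ℕ} (hi : 2 ≤ i) :
    2 * sin (3 * firstZeroAngle i) ∈ (P (2 * i)).roots := by
  have hpos := firstZeroAngle_pos i
  refine two_mul_sin_mem_roots_P (cos_pos_of_mem_Ioo
    ⟨by linarith [pi_pos], three_mul_firstZeroAngle_lt_pi_div_two hi⟩).ne' ?_
  rw [mul_left_comm, two_mul_add_one_mul_firstZeroAngle]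
  exact cos_eq_zero_iff.2 ⟨1, by push_cast; ring⟩

theorem abs_eval_P_two_mul_sin_lt_cos_sq {i : ℕ} (hi : 1 ≤ i) {θ : ℝ} (hθ0 : θ ≠ 0)
    (hθ : |θ| ≤ firstZeroAngle i) : |(P (2 * i)).eval (2 * sin θ)| < cos θ ^ 2 := by
  have hcos := cos_pos_of_abs_le_firstZeroAngle hi hθ
  have hθpos := abs_pos.2 hθ0
  have hiR : (1 : ℝ) ≤ i := mod_cast hi
  have hangle : (2 * i + 1) * |θ| ≤ π / 2 := by
    grw [hθ, two_mul_add_one_mul_firstZeroAngle]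
  have hcos_lt_one : cos θ < 1 := by
    rw [← cos_abs, ← cos_zero]
    exact cos_lt_cos_of_nonneg_of_le_pi le_rfl (by nlinarith [pi_pos]) hθpos
  refine lt_of_mul_lt_mul_right ?_ hcos.le
  calc
    |(P (2 * i)).eval (2 * sin θ)| * cos θ = |cos ((2 * i + 1) * |θ|)| := by
      rw [← abs_of_pos hcos, abs_eval_P_two_mul_sin_mul_abs_cos, ← cos_abs (_ * θ), abs_mul,
        abs_of_pos (by positivity : (0 : ℝ) < 2 * i + 1)]
    _ = cos ((2 * i + 1) * |θ|) :=
      abs_of_nonneg <| cos_nonneg_of_neg_pi_div_two_le_of_le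
        ((neg_nonpos.2 pi_div_two_pos.le).trans (by positivity)) hangle
    _ ≤ cos (3 * |θ|) :=
      cos_le_cos_of_nonneg_of_le_pi (by positivity) (by linarith [pi_pos]) (by gcongr; linarith)
    _ = 4 * cos θ ^ 3 - 3 * cos θ := by rw [cos_three_mul, cos_abs]
    _ < cos θ ^ 2 * cos θ := by nlinarith [mul_pos hcos hcos]

theorem abs_eval_prod_P_lt_one {ι : Type*} [Fintype ι] [DecidableEq ι] {i : ι → ℕ} {t : Finset ι}
    (htcard : #t ≤ 2) (ht : tᶜ.Nonempty) {θ : ℝ} (hθ0 : θ ≠ 0) (hi : ∀ k ∉ t, 1 ≤ i k)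
    (hθ : ∀ k ∉ t, |θ| ≤ firstZeroAngle (i k)) :
    |(∏ k, P (2 * i k)).eval (2 * sin θ)| < 1 := by
  -- A factor in `t` is at most `1 / |cos θ|`, whereas the others are less than `cos θ ^ 2`.
  set a : ι → ℝ := fun k ↦ |(P (2 * i k)).eval (2 * sin θ)| with ha
  have hsmall (k) (hk : k ∈ tᶜ) : a k < cos θ ^ 2 :=
    have hk := Finset.mem_compl.1 hk
    abs_eval_P_two_mul_sin_lt_cos_sq (hi k hk) hθ0 (hθ k hk)
  have hcompl : ∏ k ∈ tᶜ, a k < cos θ ^ 2 := by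
    obtain ⟨d, hd⟩ := ht
    rw [← Finset.mul_prod_erase _ _ hd]
    refine (mul_le_of_le_one_right (abs_nonneg _) (Finset.prod_le_one (fun _ _ ↦ abs_nonneg _)
      fun k hk ↦ ?_)).trans_lt (hsmall d hd)
    exact (hsmall k (Finset.mem_of_mem_erase hk)).le.trans (cos_sq_le_one θ)
  have ht_le : (∏ k ∈ t, a k) * cos θ ^ 2 ≤ 1 := calc
    (∏ k ∈ t, a k) * cos θ ^ 2 ≤ (∏ k ∈ t, a k) * |cos θ| ^ #t := by
      rw [← sq_abs]
      gcongr ?_ * ?_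
      exact pow_le_pow_of_le_one (abs_nonneg _) (abs_cos_le_one θ) htcard
    _ = ∏ k ∈ t, |cos ((2 * i k + 1) * θ)| := by
      simp only [ha, ← Finset.prod_const, ← Finset.prod_mul_distrib,
        abs_eval_P_two_mul_sin_mul_abs_cos]
    _ ≤ 1 := Finset.prod_le_one (fun _ _ ↦ abs_nonneg _) fun _ _ ↦ abs_cos_le_one _
  rw [eval_prod, Finset.abs_prod, ← Finset.prod_mul_prod_compl t]
  have ht_nonneg : 0 ≤ ∏ k ∈ t, a k := Finset.prod_nonneg fun _ _ ↦ abs_nonneg _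
  rcases ht_nonneg.eq_or_lt with h0 | hpos
  · rw [← h0, zero_mul]
    exact one_pos
  · exact (mul_lt_mul_of_pos_left hcompl hpos).trans_le ht_le

theorem card_le_two_of_splits_add_C {q : ℝ[X]} {e : ℝ} (hq : (q + C e).Splits) {A : Set ℝ}
    (hA : A.OrdConnected) (hqA : ∀ θ ∈ A, q.eval (2 * sin θ) ≠ -e) {Θ : Multiset ℝ}
    (hΘA : ∀ θ ∈ Θ, θ ∈ A) (hΘ : Θ.map (fun θ ↦ 2 * sin θ) ≤ q.roots) : Θ.card ≤ 2 := by
  classical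
  set I : Set ℝ := (fun θ ↦ 2 * sin θ) '' A
  have hIconn : I.OrdConnected :=
    (hA.isPreconnected.image _ (by fun_prop)).ordConnected
  have hzero : ∀ x ∈ I, (q + C e).eval x ≠ 0 := by
    rintro _ ⟨θ, hθ, rfl⟩
    simpa [add_eq_zero_iff_eq_neg] using hqA θ hθ
  calc
    Θ.card = (Θ.map fun θ ↦ 2 * sin θ).card := (Multiset.card_map _ _).symm
    _ ≤ (q.roots.filter (· ∈ I)).card := Multiset.card_le_card <|
      Multiset.le_filter.2 ⟨hΘ, by
        simp only [Multiset.mem_map, forall_exists_index, and_imp, forall_apply_eq_imp_iff₂]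
        exact fun θ hθ ↦ Set.mem_image_of_mem _ (hΘA θ hθ)⟩
    _ ≤ 2 := card_filter_roots_le_two_of_derivative_eq hq hIconn hzero (by simp)

theorem map_two_mul_sin_firstZeroAngle_le_roots_prod {ι : Type*} [Fintype ι] {i : ι → ℕ}
    (hi : ∀ k, 1 ≤ i k) (s : Finset ι) :
    s.val.map (fun k ↦ 2 * sin (firstZeroAngle (i k))) ≤ (∏ k, P (2 * i k)).roots := by
  rw [← roots_multiset_prod_X_sub_C (s.val.map _), Multiset.map_map]
  refine roots.le_of_dvd (Finset.prod_ne_zero_iff.2 fun k _ ↦ P_two_mul_ne_zero (i k)) ?_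
  calc
    ∏ k ∈ s, (X - C (2 * sin (firstZeroAngle (i k)))) ∣ ∏ k ∈ s, P (2 * i k) :=
      Finset.prod_dvd_prod_of_dvd _ _ fun k _ ↦ dvd_iff_isRoot.2 <|
        isRoot_of_mem_roots (two_mul_sin_firstZeroAngle_mem_roots (hi k))
    _ ∣ ∏ k, P (2 * i k) := Finset.prod_dvd_prod_of_subset _ _ _ s.subset_univ

theorem card_le_two_of_splits_prod_P_add_C {ι : Type*} [Fintype ι] {i : ι → ℕ}
    (hi : ∀ k, 1 ≤ i k) {e : ℝ} (he : |e| = 1) (hs : ((∏ k, P (2 * i k)) + C e).Splits) :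
    Fintype.card ι ≤ 2 := by
  classical
  by_contra! hcard
  obtain ⟨d, hlt, hle⟩ := exists_card_lt_and_le_card i three_ne_zero hcard
  set Θ : Multiset ℝ := ({k | i d ≤ i k} : Finset ι).val.map fun k ↦ firstZeroAngle (i k) with hΘ
  suffices Θ.card ≤ 2 by
    rw [hΘ, Multiset.card_map, Finset.card_val] at this
    omega
  refine card_le_two_of_splits_add_C hs (A := Set.Ioc 0 (firstZeroAngle (i d)))
    Set.ordConnected_Ioc (fun θ hθ heq ↦ ?_) ?_ ?_
  · refine (abs_eval_prod_P_lt_one (i := i) (t := {k | i d < i k}) (Nat.lt_succ_iff.1 hlt)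
      ⟨d, by simp⟩ hθ.1.ne' (fun k _ ↦ hi k) fun k hk ↦ ?_).ne (by rw [heq, abs_neg, he])
    rw [abs_of_pos hθ.1]
    exact hθ.2.trans (firstZeroAngle_antitone (by simpa using hk))
  · simp only [hΘ, Multiset.mem_map, Finset.mem_val, Finset.mem_filter, Finset.mem_univ, true_and]
    rintro _ ⟨k, hk, rfl⟩
    exact ⟨firstZeroAngle_pos _, firstZeroAngle_antitone hk⟩
  · simpa only [hΘ, Multiset.map_map, Function.comp_def] using
      map_two_mul_sin_firstZeroAngle_le_roots_prod hi _

theorem pair_add_singleton_le_roots_mul {R : Type*} [CommRing R] [IsDomain R] {p q : R[X]}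
    (hpq : p * q ≠ 0) {x y z : R} (hxy : x ≠ y) (hx : x ∈ p.roots) (hy : y ∈ p.roots)
    (hz : z ∈ q.roots) : {x, y} + {z} ≤ (p * q).roots := by
  rw [roots_mul hpq]
  refine add_le_add ((Multiset.le_iff_subset (by simpa using hxy)).2 ?_)
    (Multiset.singleton_le.2 hz)
  simp [hx, hy]

section Pair

variable {u v : ℕ}

theorem P_mul_P_ne_zero : P (2 * u) * P (2 * v) ≠ 0 :=
  mul_ne_zero (P_two_mul_ne_zero u) (P_two_mul_ne_zero v)

theorem abs_eval_P_mul_P_lt_one (hv : 1 ≤ v) {θ : ℝ} (hθ0 : θ ≠ 0) (hθ : |θ| ≤ firstZeroAngle v) :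
    |(P (2 * u) * P (2 * v)).eval (2 * sin θ)| < 1 := by
  simpa using abs_eval_prod_P_lt_one (i := ![u, v]) (t := {0}) (by simp) ⟨1, by simp⟩ hθ0
    (by simpa [Fin.forall_fin_two]) (by simpa [Fin.forall_fin_two])

theorem eq_neg_one_pow_of_splits (hv : 1 ≤ v) (huv : v ≤ u) {e : ℝ} (he : |e| = 1)
    (hs : (P (2 * u) * P (2 * v) + C e).Splits) : e = (-1) ^ (u + v + 1) := by
  by_contra hsign
  have hu := hv.trans huv
  have hαu := firstZeroAngle_pos u
  have hαuv := firstZeroAngle_antitone huv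
  have hsin : 0 < sin (firstZeroAngle u) :=
    sin_pos_of_pos_of_lt_pi hαu (by linarith [firstZeroAngle_le_pi_div_six hu, pi_pos])
  have hroots := pair_add_singleton_le_roots_mul P_mul_P_ne_zero
    (x := 2 * sin (firstZeroAngle u)) (y := 2 * sin (-firstZeroAngle u)) (by rw [sin_neg]; linarith)
    (two_mul_sin_firstZeroAngle_mem_roots hu) (two_mul_sin_neg_firstZeroAngle_mem_roots hu)
    (two_mul_sin_firstZeroAngle_mem_roots hv)
  suffices ({firstZeroAngle u, -firstZeroAngle u} + {firstZeroAngle v} : Multiset ℝ).card ≤ 2 by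
    simp at this
  refine card_le_two_of_splits_add_C hs
    (A := Set.Icc (-firstZeroAngle v) (firstZeroAngle v)) Set.ordConnected_Icc
    (fun θ hθ heq ↦ ?_) ?_ (by simpa using hroots)
  · by_cases hθ0 : θ = 0
    · simp only [hθ0, sin_zero, mul_zero, eval_mul, eval_zero_P_two_mul, ← pow_add] at heq
      exact hsign (by rw [pow_succ, heq]; ring)
    · exact (abs_eval_P_mul_P_lt_one hv hθ0 (abs_le.2 hθ)).ne (by rw [heq, abs_neg, he])
  · simp only [Multiset.insert_eq_cons, Multiset.cons_add, Multiset.mem_cons,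
      Multiset.singleton_add, Multiset.mem_singleton, Set.mem_Icc]
    rintro θ (rfl | rfl | rfl) <;> constructor <;> linarith

theorem eval_P_mul_P_ne_neg_one_pow (huv : v + 2 ≤ u) {θ : ℝ} (hθv : firstZeroAngle v ≤ θ)
    (hθu : θ ≤ 3 * firstZeroAngle u) :
    (P (2 * u) * P (2 * v)).eval (2 * sin θ) ≠ (-1) ^ (u + v) := by
  intro heq
  have hθ : 0 < θ := (firstZeroAngle_pos v).trans_le hθv
  have huvR : (v : ℝ) + 2 ≤ u := mod_cast huv
  have hmul : cos ((2 * u + 1) * θ) * cos ((2 * v + 1) * θ) = cos θ ^ 2 := by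
    have hu := eval_P_two_mul_sin_mul_cos u θ
    have hv := eval_P_two_mul_sin_mul_cos v θ
    refine mul_left_cancel₀ (pow_ne_zero (u + v) (by norm_num : (-1 : ℝ) ≠ 0)) ?_
    calc
      _ = ((-1) ^ u * cos ((2 * u + 1) * θ)) * ((-1) ^ v * cos ((2 * v + 1) * θ)) := by ring
      _ = (P (2 * u) * P (2 * v)).eval (2 * sin θ) * cos θ ^ 2 := by
        rw [← hu, ← hv, eval_mul]; ring
      _ = (-1) ^ (u + v) * cos θ ^ 2 := by rw [heq]
  have hdiff_le : (2 * u + 1) * θ - (2 * v + 1) * θ ≤ π := by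
    have hu : (2 * u + 1) * θ ≤ 3 * (π / 2) := by
      grw [hθu, mul_left_comm, two_mul_add_one_mul_firstZeroAngle]
    have hv : π / 2 ≤ (2 * v + 1) * θ := by
      grw [← hθv, two_mul_add_one_mul_firstZeroAngle]
    linarith
  -- By product-to-sum, `hmul` says that `cos (difference) + cos (sum) = 1 + cos (2 * θ)`.
  have hcos_lt : cos ((2 * u + 1) * θ - (2 * v + 1) * θ) < cos (2 * θ) :=
    cos_lt_cos_of_nonneg_of_le_pi (by positivity) hdiff_le (by nlinarith)
  have hcos_le := cos_le_one ((2 * u + 1) * θ + (2 * v + 1) * θ)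
  rw [cos_add] at hcos_le
  rw [cos_sub, cos_two_mul] at hcos_lt
  linarith

theorem le_add_one_of_splits (hv : 1 ≤ v)
    (hs : (P (2 * u) * P (2 * v) + C ((-1) ^ (u + v + 1))).Splits) : u ≤ v + 1 := by
  by_contra! huv
  have hu : 2 ≤ u := by omega
  have hαu := firstZeroAngle_pos u
  have hαv := firstZeroAngle_pos v
  have hαuv := firstZeroAngle_antitone (by omega : v ≤ u)
  have hsin : sin (firstZeroAngle u) < sin (3 * firstZeroAngle u) :=
    sin_lt_sin_of_lt_of_le_pi_div_two (by linarith [pi_pos])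
      (three_mul_firstZeroAngle_lt_pi_div_two hu).le (by linarith)
  have hroots := pair_add_singleton_le_roots_mul P_mul_P_ne_zero
    (x := 2 * sin (firstZeroAngle u)) (y := 2 * sin (3 * firstZeroAngle u)) (by linarith)
    (two_mul_sin_firstZeroAngle_mem_roots (by omega))
    (two_mul_sin_three_mul_firstZeroAngle_mem_roots hu) (two_mul_sin_firstZeroAngle_mem_roots hv)
  suffices ({firstZeroAngle u, 3 * firstZeroAngle u} + {firstZeroAngle v} : Multiset ℝ).card ≤ 2 by
    simp at this
  refine card_le_two_of_splits_add_C hs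
    (A := Set.Ioc 0 (max (firstZeroAngle v) (3 * firstZeroAngle u))) Set.ordConnected_Ioc
    (fun θ hθ heq ↦ ?_) ?_ (by simpa using hroots)
  · rw [pow_succ, mul_neg_one, neg_neg] at heq
    rcases le_or_gt θ (firstZeroAngle v) with hθv | hθv
    · refine (abs_eval_P_mul_P_lt_one hv hθ.1.ne' ?_).ne (by rw [heq, abs_neg_one_pow])
      rwa [abs_of_pos hθ.1]
    · have hθu := (le_max_iff.1 hθ.2).resolve_left hθv.not_ge
      exact eval_P_mul_P_ne_neg_one_pow huv hθv.le hθu heq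
  · simp only [Multiset.insert_eq_cons, Multiset.cons_add, Multiset.mem_cons,
      Multiset.singleton_add, Multiset.mem_singleton, Set.mem_Ioc, le_max_iff]
    rintro θ (rfl | rfl | rfl)
    · exact ⟨hαu, .inl hαuv⟩
    · exact ⟨by positivity, .inr le_rfl⟩
    · exact ⟨hαv, .inl le_rfl⟩

end Pair

section RealZeros

theorem im_cos_eq_zero_of_sin_natCast_mul_eq_zero {n : ℕ} (hn : n ≠ 0) {φ : ℂ}
    (h : Complex.sin (n * φ) = 0) : (Complex.cos φ).im = 0 := by
  obtain ⟨k, hk⟩ := Complex.sin_eq_zero_iff.1 h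
  have hφ : φ = ((k * π / n : ℝ) : ℂ) := by
    push_cast
    rw [← hk, mul_div_cancel_left₀ _ (Nat.cast_ne_zero.2 hn)]
  rw [hφ, Complex.cos_ofReal_im]

theorem im_cos_eq_zero_of_cos_natCast_mul_eq_zero {n : ℕ} {φ : ℂ}
    (h : Complex.cos (n * φ) = 0) : (Complex.cos φ).im = 0 := by
  rcases eq_or_ne n 0 with rfl | hn
  · simp at h
  · refine im_cos_eq_zero_of_sin_natCast_mul_eq_zero (mul_ne_zero two_ne_zero hn) ?_
    rw [Nat.cast_mul, mul_assoc, Nat.cast_two, Complex.sin_two_mul, h, mul_zero]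

theorem exists_eq_two_mul_cos (z : ℂ) : ∃ φ, z = 2 * Complex.cos φ := by
  obtain ⟨φ, hφ⟩ := Complex.cos_surjective (z / 2)
  exact ⟨φ, by rw [hφ]; ring⟩

theorem realRooted_P (n : ℕ) : RealRooted (P n) := by
  intro z hz
  obtain ⟨φ, rfl⟩ := exists_eq_two_mul_cos z
  have hsin := aeval_P_two_mul_cos_mul_sin n φ
  rw [hz, zero_mul, ← Nat.cast_add_one] at hsin
  simp [im_cos_eq_zero_of_sin_natCast_mul_eq_zero n.succ_ne_zero hsin.symm]

theorem realRooted_P_two_mul_sub_one {n : ℕ} (hn : n ≠ 0) : RealRooted (P (2 * n) - 1) := by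
  intro z hz
  obtain ⟨φ, rfl⟩ := exists_eq_two_mul_cos z
  have hfactor : aeval (2 * Complex.cos φ) (P (2 * n) - 1) * Complex.sin φ =
      2 * Complex.sin (n * φ) * Complex.cos ((n + 1 : ℕ) * φ) := by
    rw [map_sub, map_one, sub_mul, aeval_P_two_mul_cos_mul_sin, one_mul, Complex.sin_sub_sin]
    push_cast
    ring_nf
  rw [hz, zero_mul, eq_comm, mul_eq_zero, mul_eq_zero_iff_left two_ne_zero] at hfactor
  simp [hfactor.elim (im_cos_eq_zero_of_sin_natCast_mul_eq_zero hn)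
    im_cos_eq_zero_of_cos_natCast_mul_eq_zero]

theorem realRooted_P_two_mul_add_one (n : ℕ) : RealRooted (P (2 * n) + 1) := by
  intro z hz
  obtain ⟨φ, rfl⟩ := exists_eq_two_mul_cos z
  have hfactor : aeval (2 * Complex.cos φ) (P (2 * n) + 1) * Complex.sin φ =
      2 * Complex.sin ((n + 1 : ℕ) * φ) * Complex.cos (n * φ) := by
    rw [map_add, map_one, add_mul, aeval_P_two_mul_cos_mul_sin, one_mul, Complex.sin_add_sin]
    push_cast
    ring_nf
  rw [hz, zero_mul, eq_comm, mul_eq_zero, mul_eq_zero_iff_left two_ne_zero] at hfactor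
  simp [hfactor.elim (im_cos_eq_zero_of_sin_natCast_mul_eq_zero n.succ_ne_zero)
    im_cos_eq_zero_of_cos_natCast_mul_eq_zero]

theorem realRooted_P_two_mul_add_C_neg_one_pow {n : ℕ} (hn : n ≠ 0) (p : ℕ) :
    RealRooted (P (2 * n) + C ((-1) ^ p)) := by
  rcases neg_one_pow_eq_or ℝ p with hp | hp <;> rw [hp]
  · simpa using realRooted_P_two_mul_add_one n
  · simpa [sub_eq_add_neg] using realRooted_P_two_mul_sub_one hn

theorem P_add_two_mul_P_add_one (n : ℕ) : P (n + 2) * P n + 1 = P (n + 1) ^ 2 := by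
  simp only [P_eq_S, Nat.cast_add, Nat.cast_one, Nat.cast_ofNat, Chebyshev.S_add_two]
  linear_combination -Chebyshev.S_sq_add_S_sq ℝ n

theorem realRooted_P_mul_P_add_one (n : ℕ) :
    RealRooted (P (2 * (n + 1)) * P (2 * n) + 1) := by
  rw [mul_add_one, P_add_two_mul_P_add_one, sq]
  exact (realRooted_P _).mul (realRooted_P _)

theorem realRooted_P_mul_self_sub_one {n : ℕ} (hn : n ≠ 0) :
    RealRooted (P (2 * n) * P (2 * n) - 1) := by
  rw [mul_self_sub_one]
  exact (realRooted_P_two_mul_add_one n).mul (realRooted_P_two_mul_sub_one hn)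

end RealZeros

theorem realRooted_P_mul_P_add_C_iff_of_le {u v p : ℕ} (hv : 1 ≤ v) (huv : v ≤ u) :
    RealRooted (P (2 * u) * P (2 * v) + C ((-1) ^ p)) ↔
      u = v ∧ Odd p ∨ u = v + 1 ∧ Even p := by
  constructor
  · intro h
    have hsign := eq_neg_one_pow_of_splits hv huv (abs_neg_one_pow p) h.splits
    have hu : u ≤ v + 1 := le_add_one_of_splits hv (hsign ▸ h.splits)
    have hparity : Even p ↔ Even (u + v + 1) := by
      rw [← neg_one_pow_eq_one_iff_even (R := ℝ) (by norm_num), hsign,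
        neg_one_pow_eq_one_iff_even (by norm_num)]
    grind
  · rintro (⟨rfl, hp⟩ | ⟨rfl, hp⟩)
    · simpa [hp.neg_one_pow, sub_eq_add_neg] using
        realRooted_P_mul_self_sub_one (Nat.one_le_iff_ne_zero.1 hv)
    · simpa [hp.neg_one_pow] using realRooted_P_mul_P_add_one v

theorem realRooted_P_mul_P_add_C_iff {u v p : ℕ} (hu : 1 ≤ u) (hv : 1 ≤ v) :
    RealRooted (P (2 * u) * P (2 * v) + C ((-1) ^ p)) ↔
      u = v ∧ Odd p ∨ (u = v + 1 ∨ v = u + 1) ∧ Even p := by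
  rcases le_total v u with h | h
  · rw [realRooted_P_mul_P_add_C_iff_of_le hv h]
    grind
  · rw [mul_comm, realRooted_P_mul_P_add_C_iff_of_le hu h]
    grind

end Chebyshev

theorem prod_P_pm_one_real_roots_iff (K : ℕ) (hK : 1 ≤ K) (i : Fin K → ℕ)
    (hi : ∀ k, 1 ≤ i k) (p : ℕ) (hp : p = 0 ∨ p = 1) :
    (∀ z : ℂ,
        (Polynomial.aeval z) ((∏ k, P (2 * i k)) + Polynomial.C ((-1 : ℝ) ^ p)) = 0 →
        z.im = 0) ↔
      (K = 1 ∨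
        (K = 2 ∧ (∀ k l : Fin K, i k = i l) ∧ p = 1) ∨
        (K = 2 ∧ (∃ k l : Fin K, i k = i l + 1) ∧ p = 0)) := by
  change RealRooted _ ↔ _
  obtain rfl | rfl | hK3 : K = 1 ∨ K = 2 ∨ 3 ≤ K := by omega
  · simpa using realRooted_P_two_mul_add_C_neg_one_pow (Nat.one_le_iff_ne_zero.1 (hi 0)) p
  · rw [Fin.prod_univ_two, realRooted_P_mul_P_add_C_iff (hi 0) (hi 1)]
    simp only [Fin.forall_fin_two, Fin.exists_fin_two]
    grind
  · have hnot : ¬RealRooted ((∏ k, P (2 * i k)) + C ((-1 : ℝ) ^ p)) := fun h ↦ by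
      have := card_le_two_of_splits_prod_P_add_C hi (abs_neg_one_pow p) h.splits
      rw [Fintype.card_fin] at this
      omega
    exact iff_of_false hnot (by omega)
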